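/- Let n ≥ 1 and α, ν > 0 with ν > α². Let v₀ ∈ H¹(ℝⁿ) and let v(t) be the solution of the linear Navier–Stokes–Voigt equation with datum v₀, i.e. v̂(ξ,t) = e^{tM(ξ)} v̂₀(ξ) with M(ξ) = −ν|ξ|²/(1+α²|ξ|²). Suppose the decay character of v₀ is r* = ∞, i.e. for every r ∈ (−n/2, ∞), ρ^{−2r−n} ∫_{|ξ|≤ρ} |v̂₀(ξ)|² dξ → 0 as ρ → 0⁺. Then for every m > 0 there exists C = C(m) > 0 such that for all t > 0, ‖v(t)‖²_{L²} + α²‖∇v(t)‖²_{L²} ≤ C (1+t)^{−m}; that is, the decay of v is faster than any algebraic rate. -/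

import Mathlib

open MeasureTheory Filter Topology Metric

/-!
Fourier splitting: cut the frequency space at the shrinking radius `ρ = t ^ (-1/4)`. Since
`M(ξ) ≤ -ν ρ² / (1 + α²)` for `|ξ| ≥ ρ` with `ρ ≤ 1`, the high frequencies carry at most
`exp (-2 ν √t / (1 + α²))` times the initial energy, which beats every power of `t`. The low
frequencies carry at most `1 + α²` times the mass of `|v̂₀|²` in the ball of radius `ρ`, and
`r* = ∞` makes this `O(ρ ^ (4 m)) = O(t ^ (-m))` for each `m > 0`.
-/

section RealAsymptotics

open Asymptotics

lemma isBigO_rpow_of_tendsto_rpow_neg_mul {f : ℝ → ℝ} {p a : ℝ}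
    (h : Tendsto (fun ρ : ℝ => ρ ^ (-p) * f ρ) (𝓝[>] 0) (𝓝 a)) :
    f =O[𝓝[>] 0] fun ρ => ρ ^ p := by
  have hmul := (isBigO_refl (fun ρ : ℝ => ρ ^ p) (𝓝[>] 0)).mul (h.isBigO_one ℝ)
  simp only [mul_one] at hmul
  refine hmul.congr' ?_ EventuallyEq.rfl
  filter_upwards [self_mem_nhdsWithin] with ρ (hρ : 0 < ρ)
  rw [← mul_assoc, ← Real.rpow_add hρ, add_neg_cancel, Real.rpow_zero, one_mul]

lemma isLittleO_exp_neg_mul_sqrt_atTop {c : ℝ} (hc : 0 < c) (m : ℝ) :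
    (fun t : ℝ => Real.exp (-c * √t)) =o[atTop] fun t => t ^ m := by
  refine ((isLittleO_exp_neg_mul_rpow_atTop hc (2 * m)).comp_tendsto
    Real.tendsto_sqrt_atTop).congr' EventuallyEq.rfl ?_
  filter_upwards [eventually_ge_atTop 0] with t ht
  rw [Function.comp_apply, Real.sqrt_eq_rpow, ← Real.rpow_mul ht]
  ring_nf

lemma isTheta_rpow_one_add_rpow_atTop (m : ℝ) :
    (fun t : ℝ => t ^ m) =Θ[atTop] fun t => (1 + t) ^ m := by
  have hshift : (fun t : ℝ => t) =Θ[atTop] fun t => 1 + t :=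
    (IsEquivalent.refl.const_add_of_norm_tendsto_atTop tendsto_norm_atTop_atTop).isTheta.symm
  exact hshift.rpow (eventually_ge_atTop 0)
    ((eventually_ge_atTop 0).mono fun t ht => add_nonneg zero_le_one ht)

lemma exists_pos_forall_le_mul_one_add_rpow {f : ℝ → ℝ} {B m : ℝ} (hm : 0 ≤ m)
    (hB : ∀ t > 0, f t ≤ B) (hf : f =O[atTop] fun t => t ^ (-m)) :
    ∃ C > 0, ∀ t > 0, f t ≤ C * (1 + t) ^ (-m) := by
  obtain ⟨K, hK, hfK⟩ := (hf.trans (isTheta_rpow_one_add_rpow_atTop (-m)).isBigO).exists_pos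
  obtain ⟨t₀, hlarge⟩ := eventually_atTop.1 (hfK.bound.and (eventually_ge_atTop 0))
  have ht₀ : 0 ≤ t₀ := (hlarge t₀ le_rfl).2
  refine ⟨K + |B| * (1 + t₀) ^ m, by positivity, fun t ht => ?_⟩
  rw [add_mul]
  rcases le_total t₀ t with h | h
  · calc f t ≤ ‖f t‖ := le_abs_self _
      _ ≤ K * ‖(1 + t) ^ (-m)‖ := (hlarge t h).1
      _ = K * (1 + t) ^ (-m) := by rw [Real.norm_of_nonneg (by positivity)]
      _ ≤ _ := le_add_of_nonneg_right (by positivity)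
  · have hone : 1 ≤ (1 + t₀) ^ m * (1 + t) ^ (-m) := by
      rw [Real.rpow_neg (by positivity), ← div_eq_mul_inv, one_le_div (by positivity)]
      gcongr
    calc f t ≤ |B| * 1 := by rw [mul_one]; exact (hB t ht).trans (le_abs_self B)
      _ ≤ |B| * ((1 + t₀) ^ m * (1 + t) ^ (-m)) := by gcongr
      _ = |B| * (1 + t₀) ^ m * (1 + t) ^ (-m) := (mul_assoc ..).symm
      _ ≤ _ := le_add_of_nonneg_left (by positivity)

end RealAsymptotics

lemma integrable_mul_of_abs_le_mul {X : Type*} [MeasurableSpace X] {μ : Measure X}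
    {φ w g : X → ℝ} {k : ℝ} (hφ : Measurable φ) (hw : Measurable w) (hw_pos : ∀ x, 0 < w x)
    (hφw : ∀ x, |φ x| ≤ k * w x) (hwg : Integrable (fun x => w x * g x) μ) :
    Integrable (fun x => φ x * g x) μ := by
  have hbound : ∀ x, ‖φ x / w x‖ ≤ k := fun x => by
    rw [Real.norm_eq_abs, abs_div, abs_of_pos (hw_pos x), div_le_iff₀ (hw_pos x)]
    exact hφw x
  refine (hwg.bdd_mul (hφ.div hw).aestronglyMeasurable (.of_forall hbound)).congr
    (.of_forall fun x => ?_)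
  have hw_ne : w x ≠ 0 := (hw_pos x).ne'
  simp only [Pi.div_apply]
  field_simp

section Voigt

variable {E G : Type*} [SeminormedAddCommGroup E]

/-- The Fourier symbol `M(ξ) = -ν|ξ|² / (1 + α²|ξ|²)` of the linear Navier–Stokes–Voigt equation,
on an arbitrary frequency space. -/
noncomputable def voigtSymbol (α ν : ℝ) (ξ : E) : ℝ :=
  -(ν * ‖ξ‖ ^ 2) / (1 + α ^ 2 * ‖ξ‖ ^ 2)

lemma voigtSymbol_nonpos {ν : ℝ} (hν : 0 ≤ ν) (α : ℝ) (ξ : E) : voigtSymbol α ν ξ ≤ 0 :=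
  div_nonpos_of_nonpos_of_nonneg (neg_nonpos.2 (by positivity)) (by positivity)

lemma voigtSymbol_le_of_le_norm {α ν ρ : ℝ} (hν : 0 ≤ ν) (hρ₀ : 0 ≤ ρ) (hρ₁ : ρ ≤ 1) {ξ : E}
    (hξ : ρ ≤ ‖ξ‖) : voigtSymbol α ν ξ ≤ -(ν / (1 + α ^ 2) * ρ ^ 2) := by
  have hρξ : ρ ^ 2 ≤ ‖ξ‖ ^ 2 := by gcongr
  have hρ_sq : ρ ^ 2 ≤ 1 := pow_le_one₀ hρ₀ hρ₁
  have hfrac : ρ ^ 2 / (1 + α ^ 2) ≤ ‖ξ‖ ^ 2 / (1 + α ^ 2 * ‖ξ‖ ^ 2) := by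
    rw [div_le_div_iff₀ (by positivity) (by positivity)]
    nlinarith [mul_le_mul_of_nonneg_right hρ_sq (by positivity : 0 ≤ α ^ 2 * ‖ξ‖ ^ 2)]
  calc voigtSymbol α ν ξ = -(ν * (‖ξ‖ ^ 2 / (1 + α ^ 2 * ‖ξ‖ ^ 2))) := by
        rw [voigtSymbol, neg_div, mul_div_assoc]
    _ ≤ -(ν * (ρ ^ 2 / (1 + α ^ 2))) := by gcongr
    _ = _ := by ring

variable [SeminormedAddCommGroup G]

/-- The density in frequency, by Plancherel, of the `H¹_α` energy at time `t` of the solution whose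
datum has Fourier transform `F`. -/
noncomputable def voigtEnergyDensity (α ν : ℝ) (F : E → G) (t : ℝ) (ξ : E) : ℝ :=
  (1 + α ^ 2 * ‖ξ‖ ^ 2) * (Real.exp (2 * t * voigtSymbol α ν ξ) * ‖F ξ‖ ^ 2)

lemma voigtEnergyDensity_le_exp_mul {α ν t c : ℝ} (ht : 0 ≤ t) (F : E → G) {ξ : E}
    (hc : voigtSymbol α ν ξ ≤ c) :
    voigtEnergyDensity α ν F t ξ ≤
      Real.exp (2 * t * c) * ((1 + α ^ 2 * ‖ξ‖ ^ 2) * ‖F ξ‖ ^ 2) := by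
  rw [voigtEnergyDensity, mul_left_comm]
  gcongr

lemma voigtEnergyDensity_le {α ν t : ℝ} (hν : 0 ≤ ν) (ht : 0 ≤ t) (F : E → G) (ξ : E) :
    voigtEnergyDensity α ν F t ξ ≤ (1 + α ^ 2 * ‖ξ‖ ^ 2) * ‖F ξ‖ ^ 2 := by
  simpa using voigtEnergyDensity_le_exp_mul ht F (voigtSymbol_nonpos hν α ξ)

variable [MeasurableSpace E]

/-- The `H¹_α` energy at time `t` of the solution whose datum has Fourier transform `F`, computed in
frequency. The measure `μ` stands for Lebesgue measure. -/
noncomputable def voigtEnergy (μ : Measure E) (α ν : ℝ) (F : E → G) (t : ℝ) : ℝ :=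
  ∫ ξ, voigtEnergyDensity α ν F t ξ ∂μ

/-- The mass that `‖F‖²` puts on frequencies of size at most `ρ`; the decay character of the datum
records how fast it vanishes as `ρ → 0⁺`. -/
noncomputable def lowFrequencyMass (μ : Measure E) (F : E → G) (ρ : ℝ) : ℝ :=
  ∫ ξ in closedBall 0 ρ, ‖F ξ‖ ^ 2 ∂μ

variable [OpensMeasurableSpace E] {μ : Measure E} {α ν t ρ : ℝ} {F : E → G}

lemma integrable_norm_sq_of_one_add_mul
    (hF : Integrable (fun ξ => (1 + α ^ 2 * ‖ξ‖ ^ 2) * ‖F ξ‖ ^ 2) μ) :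
    Integrable (fun ξ => ‖F ξ‖ ^ 2) μ := by
  have hweight : ∀ ξ : E, |(1 : ℝ)| ≤ 1 * (1 + α ^ 2 * ‖ξ‖ ^ 2) := fun ξ => by
    rw [abs_one, one_mul]
    exact le_add_of_nonneg_right (by positivity)
  simpa only [one_mul] using integrable_mul_of_abs_le_mul measurable_const (by fun_prop)
    (fun ξ => by positivity) hweight hF

lemma integrable_one_add_mul_norm_sq_of_one_add (α : ℝ)
    (hF : Integrable (fun ξ => (1 + ‖ξ‖ ^ 2) * ‖F ξ‖ ^ 2) μ) :
    Integrable (fun ξ => (1 + α ^ 2 * ‖ξ‖ ^ 2) * ‖F ξ‖ ^ 2) μ := by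
  have hweight : ∀ ξ : E, |1 + α ^ 2 * ‖ξ‖ ^ 2| ≤ (1 + α ^ 2) * (1 + ‖ξ‖ ^ 2) := fun ξ => by
    rw [abs_of_nonneg (by positivity)]
    nlinarith [sq_nonneg α, sq_nonneg ‖ξ‖]
  exact integrable_mul_of_abs_le_mul (by fun_prop) (by fun_prop) (fun ξ => by positivity)
    hweight hF

lemma integrable_voigtEnergyDensity (hν : 0 ≤ ν) (ht : 0 ≤ t)
    (hF : Integrable (fun ξ => (1 + α ^ 2 * ‖ξ‖ ^ 2) * ‖F ξ‖ ^ 2) μ) :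
    Integrable (voigtEnergyDensity α ν F t) μ := by
  have hexp_meas : Measurable fun ξ : E => Real.exp (2 * t * voigtSymbol α ν ξ) := by
    unfold voigtSymbol
    fun_prop
  have hexp_le (ξ : E) : ‖Real.exp (2 * t * voigtSymbol α ν ξ)‖ ≤ 1 := by
    rw [Real.norm_of_nonneg (Real.exp_pos _).le, Real.exp_le_one_iff]
    exact mul_nonpos_of_nonneg_of_nonpos (by positivity) (voigtSymbol_nonpos hν α ξ)
  exact (hF.bdd_mul hexp_meas.aestronglyMeasurable (.of_forall hexp_le)).congr
    (.of_forall fun ξ => mul_left_comm ..)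

lemma voigtEnergy_le (hν : 0 ≤ ν) (ht : 0 ≤ t)
    (hF : Integrable (fun ξ => (1 + α ^ 2 * ‖ξ‖ ^ 2) * ‖F ξ‖ ^ 2) μ) :
    voigtEnergy μ α ν F t ≤ ∫ ξ, (1 + α ^ 2 * ‖ξ‖ ^ 2) * ‖F ξ‖ ^ 2 ∂μ :=
  integral_mono (integrable_voigtEnergyDensity hν ht hF) hF (voigtEnergyDensity_le hν ht F)

lemma setIntegral_closedBall_voigtEnergyDensity_le (hν : 0 ≤ ν) (ht : 0 ≤ t) (hρ : ρ ≤ 1)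
    (hF : Integrable (fun ξ => (1 + α ^ 2 * ‖ξ‖ ^ 2) * ‖F ξ‖ ^ 2) μ) :
    ∫ ξ in closedBall 0 ρ, voigtEnergyDensity α ν F t ξ ∂μ ≤
      (1 + α ^ 2) * lowFrequencyMass μ F ρ := by
  rw [lowFrequencyMass, ← integral_const_mul]
  refine setIntegral_mono_on (integrable_voigtEnergyDensity hν ht hF).integrableOn
    ((integrable_norm_sq_of_one_add_mul hF).const_mul _).integrableOn
    measurableSet_closedBall fun ξ hξ => (voigtEnergyDensity_le hν ht F ξ).trans ?_
  have hξ₁ : ‖ξ‖ ≤ 1 := (mem_closedBall_zero_iff.1 hξ).trans hρ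
  gcongr
  exact mul_le_of_le_one_right (sq_nonneg α) (pow_le_one₀ (norm_nonneg ξ) hξ₁)

lemma setIntegral_compl_closedBall_voigtEnergyDensity_le (hν : 0 ≤ ν) (ht : 0 ≤ t) (hρ₀ : 0 ≤ ρ)
    (hρ₁ : ρ ≤ 1) (hF : Integrable (fun ξ => (1 + α ^ 2 * ‖ξ‖ ^ 2) * ‖F ξ‖ ^ 2) μ) :
    ∫ ξ in (closedBall 0 ρ)ᶜ, voigtEnergyDensity α ν F t ξ ∂μ ≤
      Real.exp (2 * t * -(ν / (1 + α ^ 2) * ρ ^ 2)) *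
        ∫ ξ, (1 + α ^ 2 * ‖ξ‖ ^ 2) * ‖F ξ‖ ^ 2 ∂μ := by
  set decay := Real.exp (2 * t * -(ν / (1 + α ^ 2) * ρ ^ 2))
  calc ∫ ξ in (closedBall 0 ρ)ᶜ, voigtEnergyDensity α ν F t ξ ∂μ
      ≤ ∫ ξ in (closedBall 0 ρ)ᶜ, decay * ((1 + α ^ 2 * ‖ξ‖ ^ 2) * ‖F ξ‖ ^ 2) ∂μ := by
        refine setIntegral_mono_on (integrable_voigtEnergyDensity hν ht hF).integrableOn
          (hF.const_mul _).integrableOn measurableSet_closedBall.compl fun ξ hξ => ?_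
        have hρξ : ρ < ‖ξ‖ := by simpa using hξ
        exact voigtEnergyDensity_le_exp_mul ht F
          (voigtSymbol_le_of_le_norm hν hρ₀ hρ₁ hρξ.le)
    _ ≤ ∫ ξ, decay * ((1 + α ^ 2 * ‖ξ‖ ^ 2) * ‖F ξ‖ ^ 2) ∂μ :=
        setIntegral_le_integral (hF.const_mul _) (.of_forall fun ξ => by positivity)
    _ = _ := integral_const_mul ..

lemma voigtEnergy_le_lowFrequencyMass_add (hν : 0 ≤ ν) (ht : 0 ≤ t) (hρ₀ : 0 ≤ ρ) (hρ₁ : ρ ≤ 1)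
    (hF : Integrable (fun ξ => (1 + α ^ 2 * ‖ξ‖ ^ 2) * ‖F ξ‖ ^ 2) μ) :
    voigtEnergy μ α ν F t ≤ (1 + α ^ 2) * lowFrequencyMass μ F ρ +
      Real.exp (2 * t * -(ν / (1 + α ^ 2) * ρ ^ 2)) *
        ∫ ξ, (1 + α ^ 2 * ‖ξ‖ ^ 2) * ‖F ξ‖ ^ 2 ∂μ := by
  rw [voigtEnergy, ← integral_add_compl measurableSet_closedBall
    (integrable_voigtEnergyDensity hν ht hF)]
  exact add_le_add (setIntegral_closedBall_voigtEnergyDensity_le hν ht hρ₁ hF)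
    (setIntegral_compl_closedBall_voigtEnergyDensity_le hν ht hρ₀ hρ₁ hF)

lemma voigtEnergy_le_lowFrequencyMass_rpow_add (hν : 0 ≤ ν) (ht : 1 ≤ t)
    (hF : Integrable (fun ξ => (1 + α ^ 2 * ‖ξ‖ ^ 2) * ‖F ξ‖ ^ 2) μ) :
    voigtEnergy μ α ν F t ≤ (1 + α ^ 2) * lowFrequencyMass μ F (t ^ (-(1 / 4) : ℝ)) +
      (∫ ξ, (1 + α ^ 2 * ‖ξ‖ ^ 2) * ‖F ξ‖ ^ 2 ∂μ) *
        Real.exp (-(2 * ν / (1 + α ^ 2)) * √t) := by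
  have ht₀ : 0 < t := one_pos.trans_le ht
  have hscale : t * (t ^ (-(1 / 4) : ℝ)) ^ 2 = √t :=
    calc t * (t ^ (-(1 / 4) : ℝ)) ^ 2 = t ^ (1 : ℝ) * t ^ (-(1 / 2) : ℝ) := by
          rw [Real.rpow_one, ← Real.rpow_mul_natCast ht₀.le]
          norm_num
      _ = t ^ (1 / 2 : ℝ) := by
          rw [← Real.rpow_add ht₀]
          norm_num
      _ = √t := (Real.sqrt_eq_rpow t).symm
  have hexponent : -(2 * ν / (1 + α ^ 2)) * √t =
      2 * t * -(ν / (1 + α ^ 2) * (t ^ (-(1 / 4) : ℝ)) ^ 2) := by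
    rw [← hscale]
    ring
  rw [hexponent, mul_comm (∫ ξ, _ ∂μ)]
  exact voigtEnergy_le_lowFrequencyMass_add hν ht₀.le (by positivity)
    (Real.rpow_le_one_of_one_le_of_nonpos ht (by norm_num)) hF

open Asymptotics

lemma voigtEnergy_isBigO_rpow_neg {m : ℝ} (hν : 0 < ν)
    (hF : Integrable (fun ξ => (1 + α ^ 2 * ‖ξ‖ ^ 2) * ‖F ξ‖ ^ 2) μ)
    (hlow : lowFrequencyMass μ F =O[𝓝[>] 0] fun ρ => ρ ^ (4 * m)) :
    voigtEnergy μ α ν F =O[atTop] fun t => t ^ (-m) := by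
  have hradius : Tendsto (fun t : ℝ => t ^ (-(1 / 4) : ℝ)) atTop (𝓝[>] 0) :=
    tendsto_nhdsWithin_iff.2 ⟨tendsto_rpow_neg_atTop (by norm_num),
      (eventually_gt_atTop 0).mono fun t ht => Real.rpow_pos_of_pos ht _⟩
  have hmass : (fun t : ℝ => lowFrequencyMass μ F (t ^ (-(1 / 4) : ℝ))) =O[atTop]
      fun t => t ^ (-m) := by
    refine (hlow.comp_tendsto hradius).congr' EventuallyEq.rfl ?_
    filter_upwards [eventually_ge_atTop 0] with t ht
    rw [Function.comp_apply, ← Real.rpow_mul ht]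
    ring_nf
  have hexp : (fun t => Real.exp (-(2 * ν / (1 + α ^ 2)) * √t)) =O[atTop] fun t => t ^ (-m) :=
    (isLittleO_exp_neg_mul_sqrt_atTop (by positivity) (-m)).isBigO
  have henergy_nonneg (t : ℝ) : 0 ≤ voigtEnergy μ α ν F t :=
    integral_nonneg fun ξ => by unfold voigtEnergyDensity; positivity
  refine IsBigO.trans (.of_norm_eventuallyLE ?_)
    ((hmass.const_mul_left (1 + α ^ 2)).add
      (hexp.const_mul_left (∫ ξ, (1 + α ^ 2 * ‖ξ‖ ^ 2) * ‖F ξ‖ ^ 2 ∂μ)))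
  filter_upwards [eventually_ge_atTop 1] with t ht
  rw [Real.norm_of_nonneg (henergy_nonneg t)]
  exact voigtEnergy_le_lowFrequencyMass_rpow_add hν.le ht hF

theorem linear_NSV_fast_decay_general (hν : 0 < ν)
    (hF : Integrable (fun ξ => (1 + α ^ 2 * ‖ξ‖ ^ 2) * ‖F ξ‖ ^ 2) μ)
    (hlow : ∀ p > (0 : ℝ), lowFrequencyMass μ F =O[𝓝[>] 0] fun ρ => ρ ^ p) :
    ∀ m > (0 : ℝ), ∃ C > 0, ∀ t > 0, voigtEnergy μ α ν F t ≤ C * (1 + t) ^ (-m) := fun m hm =>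
  exists_pos_forall_le_mul_one_add_rpow hm.le (fun _ ht => voigtEnergy_le hν.le ht.le hF)
    (voigtEnergy_isBigO_rpow_neg hν hF (hlow (4 * m) (by positivity)))

end Voigt

/-- **Fast decay for the linear Navier–Stokes–Voigt equation when `r* = ∞`.**
If `ν > α²` and for every `r ∈ (-n/2, ∞)` the decay indicator
`ρ^{-2r-n} ∫_{|ξ|≤ρ} |v̂₀|² → 0` as `ρ → 0⁺`, then for every `m > 0` there is `C > 0` with
`‖v(t)‖²_{L²} + α²‖∇v(t)‖²_{L²} ≤ C (1+t)^{-m}` for all `t > 0`, where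
`v̂(ξ,t) = e^{tM(ξ)} v̂₀(ξ)`, `M(ξ) = -ν|ξ|²/(1+α²|ξ|²)`, and by Plancherel
`‖v(t)‖²_{L²} + α²‖∇v(t)‖²_{L²} = ∫ (1+α²|ξ|²) e^{2tM(ξ)} |v̂₀(ξ)|² dξ`. -/
theorem linear_NSV_fast_decay
    (n : ℕ) (hn : 1 ≤ n) (α ν : ℝ) (hα : 0 < α) (hν : 0 < ν) (hνα : α ^ 2 < ν)
    (F0 : EuclideanSpace ℝ (Fin n) → ℂ)
    (hH1 : Integrable (fun ξ : EuclideanSpace ℝ (Fin n) => (1 + ‖ξ‖ ^ 2) * ‖F0 ξ‖ ^ 2))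
    (hchar : ∀ r : ℝ, -(n : ℝ) / 2 < r →
      Tendsto (fun ρ : ℝ => ρ ^ (-(2 * r) - (n : ℝ)) *
        ∫ ξ in closedBall (0 : EuclideanSpace ℝ (Fin n)) ρ, ‖F0 ξ‖ ^ 2)
        (𝓝[>] (0:ℝ)) (𝓝 0)) :
    ∀ m > (0:ℝ), ∃ C > (0:ℝ), ∀ t > (0:ℝ),
      (∫ ξ : EuclideanSpace ℝ (Fin n),
          (1 + α ^ 2 * ‖ξ‖ ^ 2) *
            (Real.exp (2 * t * (-(ν * ‖ξ‖ ^ 2) / (1 + α ^ 2 * ‖ξ‖ ^ 2))) * ‖F0 ξ‖ ^ 2))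
        ≤ C * (1 + t) ^ (-m) := by
  refine linear_NSV_fast_decay_general hν (integrable_one_add_mul_norm_sq_of_one_add α hH1)
    fun p hp => isBigO_rpow_of_tendsto_rpow_neg_mul (a := 0) ?_
  rw [show -p = -(2 * ((p - n) / 2)) - n by ring]
  exact hchar ((p - n) / 2) (by linarith)
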